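/- Let U be a nonempty finite set, f : Finset U → ℝ monotone and submodular with f(∅) = 0, κ ≥ 1 a natural number, ε ≥ 0, and OPT ⊆ U with |OPT| ≤ κ. Suppose S_0 = ∅ and for each i < κ, S_{i+1} = S_i ∪ {a_i} where a_i ∈ U satisfies Δf(S_i, a_i) ≥ max_{x ∈ U} Δf(S_i, x) − ε/κ. Then f(S_κ) ≥ (1 − e^{−1}) · f(OPT) − ε. -/

import Mathlib

/-!
By monotonicity and submodularity, the gap `f T - f A` is at most the sum of the marginal gains at
`A` of the elements of `T`, hence at most `k` times the largest marginal gain when `T` has at most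
`k` elements. A greedy step with additive error `δ` therefore multiplies the gap by at most
`1 - 1/k`, up to the error `δ`. After `n` steps the gap has shrunk by the factor
`(1 - 1/k) ^ n ≤ exp (-n/k)`, and the errors have added up to at most `n * δ`.
-/

theorem le_pow_mul_add_of_succ_le {R : Type*} [CommSemiring R] [PartialOrder R] [IsOrderedRing R]
    {u : ℕ → R} {r δ : R} (hr₀ : 0 ≤ r) (hr₁ : r ≤ 1) (hδ : 0 ≤ δ) {n : ℕ}
    (hu : ∀ i < n, u (i + 1) ≤ r * u i + δ) : u n ≤ r ^ n * u 0 + n * δ := by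
  induction n with
  | zero => simp
  | succ n ih =>
    have ih' : u n ≤ r ^ n * u 0 + n * δ := ih fun i hi ↦ hu i (Nat.lt_succ_of_lt hi)
    calc u (n + 1)
      _ ≤ r * u n + δ := hu n n.lt_succ_self
      _ ≤ r * (r ^ n * u 0 + n * δ) + δ := by gcongr
      _ = r ^ (n + 1) * u 0 + r * (n * δ) + δ := by ring
      _ ≤ r ^ (n + 1) * u 0 + n * δ + δ := by
        gcongr _ + ?_ + _
        exact mul_le_of_le_one_left (by positivity) hr₁
      _ = r ^ (n + 1) * u 0 + (n + 1 : ℕ) * δ := by push_cast; ring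

section OrderedGroup

variable {U G : Type*} [DecidableEq U] [AddCommGroup G]

/-- The marginal gain `Δf(S, x)` of adding the element `x` to the set `S`; it is zero when `x`
already belongs to `S`. -/
def marginalGain (f : Finset U → G) (S : Finset U) (x : U) : G :=
  f (insert x S) - f S

variable {f : Finset U → G} {A T : Finset U}

theorem marginalGain_of_mem {x : U} (hx : x ∈ A) : marginalGain f A x = 0 := by
  rw [marginalGain, Finset.insert_eq_of_mem hx, sub_self]

variable [PartialOrder G]

/-- Submodularity of a set function, in the form of diminishing marginal gains. -/
def IsSubmodular (f : Finset U → G) : Prop :=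
  ∀ ⦃X Y : Finset U⦄, X ⊆ Y → ∀ x ∉ Y, marginalGain f Y x ≤ marginalGain f X x

variable [IsOrderedAddMonoid G]

theorem marginalGain_nonneg (hmono : Monotone f) (S : Finset U) (x : U) :
    0 ≤ marginalGain f S x :=
  sub_nonneg.2 (hmono (Finset.subset_insert x S))

theorem IsSubmodular.sub_le_sum_marginalGain (hsub : IsSubmodular f) (A T : Finset U) :
    f (A ∪ T) - f A ≤ ∑ x ∈ T, marginalGain f A x := by
  induction T using Finset.induction_on with
  | empty => simp
  | insert x T hxT ih =>
    have hgain : marginalGain f (A ∪ T) x ≤ marginalGain f A x := by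
      by_cases hx : x ∈ A ∪ T
      · have hxA : x ∈ A := (Finset.mem_union.1 hx).resolve_right hxT
        rw [marginalGain_of_mem hx, marginalGain_of_mem hxA]
      · exact hsub Finset.subset_union_left x hx
    calc f (A ∪ insert x T) - f A
      _ = marginalGain f (A ∪ T) x + (f (A ∪ T) - f A) := by
        rw [marginalGain, Finset.union_insert, sub_add_sub_cancel]
      _ ≤ marginalGain f A x + ∑ y ∈ T, marginalGain f A y := add_le_add hgain ih
      _ = ∑ y ∈ insert x T, marginalGain f A y := (Finset.sum_insert hxT).symm

theorem IsSubmodular.sub_le_nsmul (hsub : IsSubmodular f) (hmono : Monotone f)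
    {k : ℕ} (hT : T.card ≤ k) {M : G} (hM : 0 ≤ M) (hgain : ∀ x ∈ T, marginalGain f A x ≤ M) :
    f T - f A ≤ k • M :=
  calc f T - f A
    _ ≤ f (A ∪ T) - f A := sub_le_sub_right (hmono Finset.subset_union_right) _
    _ ≤ ∑ x ∈ T, marginalGain f A x := hsub.sub_le_sum_marginalGain A T
    _ ≤ T.card • M := Finset.sum_le_card_nsmul T _ M hgain
    _ ≤ k • M := nsmul_le_nsmul_left hM hT

end OrderedGroup

section OrderedField

variable {U K : Type*} [DecidableEq U] [Nonempty U] [Field K] [LinearOrder K]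
  [IsStrictOrderedRing K] {f : Finset U → K} {T : Finset U} {k : ℕ} {δ : K}

theorem IsSubmodular.sub_le_of_greedy_step (hsub : IsSubmodular f) (hmono : Monotone f)
    (hk : 0 < k) (hT : T.card ≤ k) {A B : Finset U}
    (hgreedy : ∀ x, marginalGain f A x ≤ f B - f A + δ) :
    f T - f B ≤ (1 - (k : K)⁻¹) * (f T - f A) + δ := by
  obtain ⟨x⟩ := ‹Nonempty U›
  have hM : 0 ≤ f B - f A + δ := (marginalGain_nonneg hmono A x).trans (hgreedy x)
  have hgap : f T - f A ≤ k * (f B - f A + δ) := by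
    simpa only [nsmul_eq_mul] using hsub.sub_le_nsmul hmono hT hM fun x _ ↦ hgreedy x
  have hprogress : (k : K)⁻¹ * (f T - f A) ≤ f B - f A + δ :=
    (inv_mul_le_iff₀ (Nat.cast_pos.2 hk)).2 hgap
  linarith

theorem IsSubmodular.sub_le_of_greedy_chain (hsub : IsSubmodular f) (hmono : Monotone f)
    (hk : 0 < k) (hT : T.card ≤ k) (hδ : 0 ≤ δ) {S : ℕ → Finset U} {n : ℕ}
    (hgreedy : ∀ i < n, ∀ x, marginalGain f (S i) x ≤ f (S (i + 1)) - f (S i) + δ) :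
    f T - f (S n) ≤ (1 - (k : K)⁻¹) ^ n * (f T - f (S 0)) + n * δ :=
  le_pow_mul_add_of_succ_le (u := fun i ↦ f T - f (S i))
    (sub_nonneg.2 (Nat.cast_inv_le_one k)) (sub_le_self 1 (by positivity)) hδ
    fun i hi ↦ hsub.sub_le_of_greedy_step hmono hk hT (hgreedy i hi)

end OrderedField

theorem one_sub_inv_pow_le_exp_neg_div {k : ℕ} (n : ℕ) :
    (1 - (k : ℝ)⁻¹) ^ n ≤ Real.exp (-(n / k)) :=
  calc (1 - (k : ℝ)⁻¹) ^ n
    _ ≤ Real.exp (-(k : ℝ)⁻¹) ^ n :=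
      pow_le_pow_left₀ (sub_nonneg.2 (Nat.cast_inv_le_one k)) (Real.one_sub_le_exp_neg _) n
    _ = Real.exp (-(n / k)) := by rw [← Real.exp_nat_mul, mul_neg, div_eq_mul_inv]

theorem approx_greedy_guarantee_general {U : Type*} [DecidableEq U] [Nonempty U]
    {f : Finset U → ℝ} (hmono : Monotone f) (hsub : IsSubmodular f)
    {k : ℕ} (hk : 0 < k) {T : Finset U} (hT : T.card ≤ k) {δ : ℝ} (hδ : 0 ≤ δ)
    {S : ℕ → Finset U} (hS₀ : S 0 = ∅) {n : ℕ}
    (hgreedy : ∀ i < n, ∀ x, marginalGain f (S i) x ≤ f (S (i + 1)) - f (S i) + δ) :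
    (1 - Real.exp (-(n / k))) * (f T - f ∅) - n * δ ≤ f (S n) - f ∅ := by
  have hgap : f T - f (S n) ≤ (1 - (k : ℝ)⁻¹) ^ n * (f T - f ∅) + n * δ :=
    hS₀ ▸ hsub.sub_le_of_greedy_chain hmono hk hT hδ hgreedy
  have hdecay : (1 - (k : ℝ)⁻¹) ^ n * (f T - f ∅) ≤ Real.exp (-(n / k)) * (f T - f ∅) :=
    mul_le_mul_of_nonneg_right (one_sub_inv_pow_le_exp_neg_div n)
      (sub_nonneg.2 (hmono T.empty_subset))
  linarith

/-- Deterministic core of the greedy guarantee: if each of the `κ` greedy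
steps adds an element whose marginal gain is within `ε/κ` of the maximum marginal gain,
then `f (S κ) ≥ (1 - e⁻¹) · f OPT - ε`. -/
theorem approx_greedy_guarantee
    {U : Type*} [Fintype U] [DecidableEq U] [Nonempty U]
    (f : Finset U → ℝ)
    (hmono : ∀ X Y : Finset U, X ⊆ Y → f X ≤ f Y)
    (hsub : ∀ X Y : Finset U, X ⊆ Y → ∀ x ∉ Y,
      f (insert x X) - f X ≥ f (insert x Y) - f Y)
    (hf0 : f ∅ = 0)
    (κ : ℕ) (hκ : 1 ≤ κ)
    (ε : ℝ) (hε : 0 ≤ ε)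
    (OPT : Finset U) (hOPT : OPT.card ≤ κ)
    (S : ℕ → Finset U) (a : ℕ → U)
    (hS0 : S 0 = ∅)
    (hstep : ∀ i < κ, S (i + 1) = insert (a i) (S i))
    (hgreedy : ∀ i < κ, f (insert (a i) (S i)) - f (S i) ≥
      Finset.univ.sup' Finset.univ_nonempty (fun x => f (insert x (S i)) - f (S i)) - ε / κ) :
    f (S κ) ≥ (1 - Real.exp (-1)) * f OPT - ε := by
  have hκ₀ : (κ : ℝ) ≠ 0 := Nat.cast_ne_zero.2 (Nat.one_le_iff_ne_zero.1 hκ)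
  have hgain (i : ℕ) (hi : i < κ) (x : U) :
      marginalGain f (S i) x ≤ f (S (i + 1)) - f (S i) + ε / κ := by
    rw [hstep i hi, ← sub_le_iff_le_add]
    exact (sub_le_sub_right (Finset.le_sup' _ (Finset.mem_univ x)) _).trans (hgreedy i hi)
  simpa only [div_self hκ₀, mul_div_cancel₀ ε hκ₀, hf0, sub_zero] using
    approx_greedy_guarantee_general hmono hsub hκ hOPT (by positivity) hS0 hgain
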